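/- Let A and R be real symmetric m×m matrices with A·R = R·A and A invertible. Then ∑_{n=1}^∞ tr( R·(A² + (πn)² I)⁻¹ ) = (1/2)·tr( R·( A·cosh(A)·(sinh A)⁻¹ − I )·A⁻² ), where cosh A = (exp A + exp(−A))/2 and sinh A = (exp A − exp(−A))/2 (sinh A is invertible since A is symmetric and invertible); in particular the series converges. -/

import Mathlib

open MeasureTheory Filter Topology Matrix

noncomputable section

/-- Matrix exponential, defined by the convergent power series. -/
def mExp {m : ℕ} (M : Matrix (Fin m) (Fin m) ℝ) : Matrix (Fin m) (Fin m) ℝ :=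
  ∑' k : ℕ, ((k.factorial : ℝ)⁻¹) • M ^ k

/-- Matrix sine, defined by the convergent power series. -/
def mSin {m : ℕ} (M : Matrix (Fin m) (Fin m) ℝ) : Matrix (Fin m) (Fin m) ℝ :=
  ∑' k : ℕ, (((-1 : ℝ) ^ k / ((2 * k + 1).factorial : ℝ))) • M ^ (2 * k + 1)

/-- Matrix hyperbolic cosine. -/
def mCosh {m : ℕ} (M : Matrix (Fin m) (Fin m) ℝ) : Matrix (Fin m) (Fin m) ℝ :=
  (2⁻¹ : ℝ) • (mExp M + mExp (-M))

/-- Matrix hyperbolic sine. -/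
def mSinh {m : ℕ} (M : Matrix (Fin m) (Fin m) ℝ) : Matrix (Fin m) (Fin m) ℝ :=
  (2⁻¹ : ℝ) • (mExp M - mExp (-M))

/-- Entrywise integral of a matrix-valued function over a subset of `ℝ`. -/
def mSetIntegral {n p : Type*} (s : Set ℝ) (f : ℝ → Matrix n p ℝ) : Matrix n p ℝ :=
  Matrix.of fun i j => ∫ t in s, f t i j

lemma eti_scalar (d : ℝ) (hd : d ≠ 0) :
    Tendsto (fun N : ℕ => ∑ n ∈ Finset.range N, (d * d + (Real.pi * ((n : ℝ) + 1)) ^ 2)⁻¹)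
      atTop (𝓝 ((1 / 2) * ((d * Real.cosh d * (Real.sinh d)⁻¹ - 1) * (d * d)⁻¹))) := by
  have hpi : (Real.pi : ℂ) ≠ 0 := by exact_mod_cast Real.pi_ne_zero
  have hdc : (d : ℂ) ≠ 0 := by exact_mod_cast hd
  set x : ℂ := (d : ℂ) * Complex.I / Real.pi with hx
  have hxi : x.im = d / Real.pi := by
    have : x = ((d / Real.pi : ℝ) : ℂ) * Complex.I := by rw [hx]; push_cast; ring
    rw [this]; simp
  have hxm : x ∈ Complex.integerComplement := by
    rintro ⟨n, hn⟩
    have h2 := congrArg Complex.im hn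
    rw [hxi] at h2
    rw [Complex.intCast_im] at h2
    exact div_ne_zero hd Real.pi_ne_zero h2.symm
  have key := tendsto_logDeriv_euler_cot_sub hxm
  have hpx : (Real.pi : ℂ) * x = d * Complex.I := by rw [hx]; field_simp
  have hsinh : Real.sinh d ≠ 0 := by rwa [Ne, Real.sinh_eq_zero]
  have hsc : Complex.sinh d ≠ 0 := by
    rw [← Complex.ofReal_sinh]; exact_mod_cast hsinh
  have hterm : ∀ n : ℕ, cotTerm x n =
      (-2 * Complex.I * d * Real.pi) * (((d * d + (Real.pi * ((n : ℝ) + 1)) ^ 2)⁻¹ : ℝ) : ℂ) := by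
    intro n
    rw [cotTerm_identity hxm]
    have hpos : d * d + (Real.pi * ((n : ℝ) + 1)) ^ 2 ≠ 0 := by
      have : 0 < Real.pi * ((n : ℝ) + 1) := by positivity
      have := mul_self_nonneg d
      positivity
    have hposc : (d : ℂ) * d + (Real.pi * ((n : ℂ) + 1)) ^ 2 ≠ 0 := by exact_mod_cast hpos
    have h1 : (x + (n + 1)) * (x - (n + 1)) = -((d : ℂ) * d + (Real.pi * ((n : ℂ) + 1)) ^ 2) / Real.pi ^ 2 := by
      rw [hx]; field_simp; ring_nf; rw [Complex.I_sq]; ring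
    rw [h1, hx]
    push_cast
    field_simp
  have hlim : (Real.pi : ℂ) * Complex.cot (Real.pi * x) - 1 / x =
      (-2 * Complex.I * d * Real.pi) *
       (((1 / 2) * ((d * Real.cosh d * (Real.sinh d)⁻¹ - 1) * (d * d)⁻¹) : ℝ) : ℂ) := by
    rw [hpx, Complex.cot, Complex.cos_mul_I, Complex.sin_mul_I, hx]
    push_cast
    field_simp
    ring_nf
    simp only [Complex.I_sq]
    ring
  rw [hlim] at key
  simp only [hterm, ← Finset.mul_sum] at key
  have hc : (-2 * Complex.I * d * Real.pi) ≠ 0 := by simp [hdc, hpi]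
  have key2 := key.const_mul (-2 * Complex.I * d * Real.pi)⁻¹
  simp only [inv_mul_cancel_left₀ hc, ← Complex.ofReal_sum] at key2
  have key3 := (Complex.continuous_re.tendsto _).comp key2
  simpa only [Function.comp_def, Complex.ofReal_re] using key3

lemma eti_exp {m : ℕ} (M : Matrix (Fin m) (Fin m) ℝ) : mExp M = NormedSpace.exp M := by
  rw [NormedSpace.exp_eq_tsum ℝ]; rfl

lemma eti_conj_inv {m : ℕ} (U D E : Matrix (Fin m) (Fin m) ℝ) (hU : IsUnit U)
    (h : D * E = 1) : (U * D * U⁻¹)⁻¹ = U * E * U⁻¹ := by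
  have hU' := (Matrix.isUnit_iff_isUnit_det U).1 hU
  apply Matrix.inv_eq_right_inv
  calc U * D * U⁻¹ * (U * E * U⁻¹) = U * (D * (U⁻¹ * U) * E) * U⁻¹ := by noncomm_ring
    _ = 1 := by rw [Matrix.nonsing_inv_mul _ hU', mul_one, h, mul_one, Matrix.mul_nonsing_inv _ hU']

lemma eti_diag_inv {m : ℕ} (U : Matrix (Fin m) (Fin m) ℝ) (hU : IsUnit U) (f : Fin m → ℝ)
    (hf : ∀ i, f i ≠ 0) :
    (U * diagonal f * U⁻¹)⁻¹ = U * diagonal (fun i => (f i)⁻¹) * U⁻¹ := by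
  apply eti_conj_inv U _ _ hU
  rw [diagonal_mul_diagonal, ← diagonal_one]
  congr 1; ext i; exact mul_inv_cancel₀ (hf i)

lemma eti_diag_mul {m : ℕ} (U : Matrix (Fin m) (Fin m) ℝ) (hU : IsUnit U) (f g : Fin m → ℝ) :
    (U * diagonal f * U⁻¹) * (U * diagonal g * U⁻¹) = U * diagonal (fun i => f i * g i) * U⁻¹ := by
  have hU' := (Matrix.isUnit_iff_isUnit_det U).1 hU
  rw [← diagonal_mul_diagonal]
  calc _ = U * (diagonal f * (U⁻¹ * U) * diagonal g) * U⁻¹ := by noncomm_ring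
    _ = _ := by rw [Matrix.nonsing_inv_mul _ hU', mul_one]

lemma eti_diag_one {m : ℕ} (U : Matrix (Fin m) (Fin m) ℝ) (hU : IsUnit U) :
    (1 : Matrix (Fin m) (Fin m) ℝ) = U * diagonal (fun _ => (1 : ℝ)) * U⁻¹ := by
  have hU' := (Matrix.isUnit_iff_isUnit_det U).1 hU
  rw [diagonal_one, mul_one, Matrix.mul_nonsing_inv _ hU']

lemma eti_diag_smul {m : ℕ} (U : Matrix (Fin m) (Fin m) ℝ) (c : ℝ) (f : Fin m → ℝ) :
    c • (U * diagonal f * U⁻¹) = U * diagonal (fun i => c * f i) * U⁻¹ := by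
  have : diagonal (fun i => c * f i) = c • diagonal f := by
    rw [← diagonal_smul]; rfl
  rw [this]; simp

lemma eti_diag_add {m : ℕ} (U : Matrix (Fin m) (Fin m) ℝ) (f g : Fin m → ℝ) :
    (U * diagonal f * U⁻¹) + (U * diagonal g * U⁻¹) = U * diagonal (fun i => f i + g i) * U⁻¹ := by
  rw [← diagonal_add]; noncomm_ring

lemma eti_diag_sub {m : ℕ} (U : Matrix (Fin m) (Fin m) ℝ) (f g : Fin m → ℝ) :
    (U * diagonal f * U⁻¹) - (U * diagonal g * U⁻¹) = U * diagonal (fun i => f i - g i) * U⁻¹ := by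
  rw [← diagonal_sub]; noncomm_ring

lemma eti_diag_exp {m : ℕ} (U : Matrix (Fin m) (Fin m) ℝ) (hU : IsUnit U) (f : Fin m → ℝ) :
    mExp (U * diagonal f * U⁻¹) = U * diagonal (fun i => Real.exp (f i)) * U⁻¹ := by
  rw [eti_exp, Matrix.exp_conj _ _ hU, Matrix.exp_diagonal]
  congr 3
  ext i
  rw [Pi.coe_exp, Real.exp_eq_exp_ℝ]

lemma eti_trace {m : ℕ} (R U : Matrix (Fin m) (Fin m) ℝ) (f : Fin m → ℝ) :
    (R * (U * diagonal f * U⁻¹)).trace = ∑ i, (U⁻¹ * R * U) i i * f i := by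
  have : (R * (U * diagonal f * U⁻¹)).trace = ((U⁻¹ * R * U) * diagonal f).trace := by
    rw [← mul_assoc, Matrix.trace_mul_comm]; simp only [mul_assoc]
  rw [this]
  simp [Matrix.trace, mul_diagonal]

lemma eti_spectral {m : ℕ} (A : Matrix (Fin m) (Fin m) ℝ) (hA : A.IsSymm) :
    ∃ (U : Matrix (Fin m) (Fin m) ℝ) (d : Fin m → ℝ), IsUnit U ∧ A = U * diagonal d * U⁻¹ := by
  have hH : A.IsHermitian := by
    rw [Matrix.IsHermitian, Matrix.conjTranspose_eq_transpose_of_trivial]; exact hA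
  have h := hH.spectral_theorem
  rw [Unitary.conjStarAlgAut_apply] at h
  have hinv : (hH.eigenvectorUnitary : Matrix (Fin m) (Fin m) ℝ)⁻¹ =
      (star hH.eigenvectorUnitary : Matrix (Fin m) (Fin m) ℝ) :=
    Matrix.inv_eq_right_inv (by simp)
  refine ⟨hH.eigenvectorUnitary, hH.eigenvalues, ?_, ?_⟩
  · exact IsUnit.of_mul_eq_one _ (Unitary.coe_mul_star_self hH.eigenvectorUnitary)
  · rw [hinv]; exact h

/-- **Commutative case of the trace identity.**  For commuting symmetric `A, R`
with `A` invertible,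
`∑_{n=1}^∞ tr(R (A² + (πn)² I)⁻¹) = ½ tr(R (A cosh A (sinh A)⁻¹ - I) A⁻²)`,
and in particular the series converges. -/
theorem euler_trace_identity_commutative
    (m : ℕ) (A R : Matrix (Fin m) (Fin m) ℝ)
    (hA : A.IsSymm) (hR : R.IsSymm)
    (hcomm : A * R = R * A) (hAinv : IsUnit A.det) :
    Tendsto (fun N : ℕ => ∑ n ∈ Finset.range N,
        (R * (A * A + ((Real.pi * ((n : ℝ) + 1)) ^ 2) • (1 : Matrix (Fin m) (Fin m) ℝ))⁻¹).trace)
      atTop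
      (𝓝 ((1 / 2) *
        (R * (A * mCosh A * (mSinh A)⁻¹ - 1) * (A * A)⁻¹).trace)) := by
  obtain ⟨U, d, hU, hAU⟩ := eti_spectral A hA
  have hd : ∀ i, d i ≠ 0 := by
    have hdet : A.det = ∏ i, d i := by
      rw [hAU, Matrix.det_conj hU, det_diagonal]
    rw [hdet] at hAinv
    intro i
    exact Finset.prod_ne_zero_iff.1 hAinv.ne_zero i (Finset.mem_univ i)
  have hneg : -A = U * diagonal (fun i => - d i) * U⁻¹ := by
    have := eti_diag_smul U (-1) d
    rw [← hAU] at this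
    simpa using this
  have hcosh : mCosh A = U * diagonal (fun i => Real.cosh (d i)) * U⁻¹ := by
    rw [mCosh, hneg, hAU, eti_diag_exp U hU, eti_diag_exp U hU, eti_diag_add, eti_diag_smul]
    congr 3; ext i; rw [Real.cosh_eq]; ring
  have hsinh : mSinh A = U * diagonal (fun i => Real.sinh (d i)) * U⁻¹ := by
    rw [mSinh, hneg, hAU, eti_diag_exp U hU, eti_diag_exp U hU, eti_diag_sub, eti_diag_smul]
    congr 3; ext i; rw [Real.sinh_eq]; ring
  have hsinv := eti_diag_inv U hU (fun i => Real.sinh (d i))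
    (fun i => by simpa [Real.sinh_eq_zero] using hd i)
  have hterm : ∀ n : ℕ,
      (R * (A * A + ((Real.pi * ((n : ℝ) + 1)) ^ 2) • (1 : Matrix (Fin m) (Fin m) ℝ))⁻¹).trace =
      ∑ i, (U⁻¹ * R * U) i i * (d i * d i + (Real.pi * ((n : ℝ) + 1)) ^ 2)⁻¹ := by
    intro n
    rw [hAU, eti_diag_one U hU, eti_diag_mul U hU, eti_diag_smul, eti_diag_add,
      eti_diag_inv U hU, eti_trace]
    · simp only [mul_one]
    · intro i
      have := mul_self_nonneg (d i)
      have : 0 < Real.pi * ((n : ℝ) + 1) := by positivity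
      positivity
  have hR : (R * (A * mCosh A * (mSinh A)⁻¹ - 1) * (A * A)⁻¹).trace =
      ∑ i, (U⁻¹ * R * U) i i *
        ((d i * Real.cosh (d i) * (Real.sinh (d i))⁻¹ - 1) * (d i * d i)⁻¹) := by
    rw [hcosh, hsinh, hsinv, hAU, eti_diag_one U hU, eti_diag_mul U hU, eti_diag_mul U hU,
      eti_diag_mul U hU, eti_diag_sub, eti_diag_inv U hU _ (fun i => mul_ne_zero (hd i) (hd i)),
      mul_assoc R, eti_diag_mul U hU, eti_trace]
  rw [hR, Finset.mul_sum]
  simp only [hterm]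
  have := tendsto_finsetSum (Finset.univ : Finset (Fin m)) (fun i _ =>
    (eti_scalar (d i) (hd i)).const_mul ((U⁻¹ * R * U) i i))
  convert this using 2
  · rw [Finset.sum_comm]; simp only [Finset.mul_sum]
  · apply congrArg
    funext i; ring

end
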